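/- arXiv:2602.11486 — 4 statements merged into one kernel-verified Lean document; each statement's English description precedes it below -/
import Mathlib

section
/- Fix constants 0 < δ ≤ Δ. For every Alice value density v_A there exists a deterministic Alice strategy S_A for the repeated 2-cut game, independent of the parameters α and c below, such that: for every α < 1 and every c > 0 there exist C > 0 and T₀ ∈ ℕ with the property that for every Bob value density v_B, every deterministic Bob strategy that guarantees regret at most c·T'^α for every horizon T', and every horizon T ≥ T₀, Alice's Stackelberg regret under S_A over horizon T is at most C·T/log T. -/
open MeasureTheory Set

noncomputable section

attribute [local instance] Classical.propDecidable

/-- A value density: measurable, bounded in `[δ, Δ]` on `[0,1]`, integrating to 1 on `[0,1]`. -/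
def IsValueDensity (δ Δ : ℝ) (v : ℝ → ℝ) : Prop :=
  Measurable v ∧ (∀ x ∈ Set.Icc (0:ℝ) 1, v x ∈ Set.Icc δ Δ) ∧
    (∫ x in Set.Icc (0:ℝ) 1, v x) = 1

/-- The value of a piece `S` under density `v`. -/
def pieceVal (v : ℝ → ℝ) (S : Set ℝ) : ℝ := ∫ x in S, v x

/-- Extended cut points: `0, c 0, …, c (k-1), 1`. -/
def extCuts (k : ℕ) (c : Fin k → ℝ) : ℕ → ℝ := fun i =>
  if i = 0 then 0 else if h : i - 1 < k then c ⟨i - 1, h⟩ else 1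

/-- A valid vector of `k` cut points: nondecreasing, within `[0,1]`. -/
def ValidCuts (k : ℕ) (c : Fin k → ℝ) : Prop :=
  Monotone c ∧ ∀ i, c i ∈ Set.Icc (0:ℝ) 1

/-- The two pieces of the alternating partition induced by cuts `c`:
`true` gives the union of even-indexed intervals, `false` the odd-indexed ones. -/
def altPiece (k : ℕ) (c : Fin k → ℝ) (b : Bool) : Set ℝ :=
  ⋃ i ∈ Finset.range (k + 1),
    if decide (i % 2 = 0) = b then Set.Icc (extCuts k c i) (extCuts k c (i + 1)) else ∅

/-- Alice's Stackelberg value with `k` cuts: max of `V_A(Z_A)` over alternating partitions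
`(Z_A, Z_B)` induced by `k` cut points with `V_B(Z_B) ≥ 1/2`. -/
def stackelbergValue (k : ℕ) (vA vB : ℝ → ℝ) : ℝ :=
  sSup { u : ℝ | ∃ (c : Fin k → ℝ) (b : Bool), ValidCuts k c ∧
    1 / 2 ≤ pieceVal vB (altPiece k c (!b)) ∧ u = pieceVal vA (altPiece k c b) }

/-- A history of play: the list of (Alice's cuts, Bob's choice) in past rounds. -/
abbrev Hist (k : ℕ) := List ((Fin k → ℝ) × Bool)

/-- Alice's deterministic strategy: horizon and history ↦ next cut vector. -/
abbrev AliceStrategy (k : ℕ) := ℕ → Hist k → (Fin k → ℝ)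

/-- Bob's deterministic strategy: horizon, history, and Alice's current cuts ↦ choice. -/
abbrev BobStrategy (k : ℕ) := ℕ → Hist k → (Fin k → ℝ) → Bool

/-- The history of play after `t` rounds. -/
def playHist (k : ℕ) (SA : AliceStrategy k) (SB : BobStrategy k) (T : ℕ) : ℕ → Hist k
  | 0 => []
  | t + 1 =>
      let h := playHist k SA SB T t
      let cuts := SA T h
      h ++ [(cuts, SB T h cuts)]

/-- Alice's cuts in round `t` (0-indexed). -/
def roundCuts (k : ℕ) (SA : AliceStrategy k) (SB : BobStrategy k) (T t : ℕ) : Fin k → ℝ :=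
  SA T (playHist k SA SB T t)

/-- Bob's choice in round `t` (0-indexed). -/
def roundChoice (k : ℕ) (SA : AliceStrategy k) (SB : BobStrategy k) (T t : ℕ) : Bool :=
  SB T (playHist k SA SB T t) (roundCuts k SA SB T t)

/-- Alice's Stackelberg regret over horizon `T`: in each round she receives the value of
the piece Bob did not choose. -/
def aliceRegret (k : ℕ) (vA vB : ℝ → ℝ) (SA : AliceStrategy k) (SB : BobStrategy k)
    (T : ℕ) : ℝ :=
  ∑ t ∈ Finset.range T,
    (stackelbergValue k vA vB -
      pieceVal vA (altPiece k (roundCuts k SA SB T t) (!(roundChoice k SA SB T t))))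

/-- Bob's regret over horizon `T` relative to always choosing his preferred piece. -/
def bobRegret (k : ℕ) (vB : ℝ → ℝ) (SA : AliceStrategy k) (SB : BobStrategy k) (T : ℕ) : ℝ :=
  ∑ t ∈ Finset.range T,
    (max (pieceVal vB (altPiece k (roundCuts k SA SB T t) true))
        (pieceVal vB (altPiece k (roundCuts k SA SB T t) false)) -
      pieceVal vB (altPiece k (roundCuts k SA SB T t) (roundChoice k SA SB T t)))

/-- Bob's strategy guarantees regret at most `R T` against every Alice strategy and horizon. -/
def BobGuarantees (k : ℕ) (vB : ℝ → ℝ) (SB : BobStrategy k) (R : ℕ → ℝ) : Prop :=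
  ∀ (SA : AliceStrategy k) (T : ℕ), bobRegret k vB SA SB T ≤ R T

/-- The myopic Bob: chooses the piece of larger `V_B`-value, breaking ties towards
the piece of smaller `V_A`-value. -/
def myopicBob (k : ℕ) (vA vB : ℝ → ℝ) : BobStrategy k := fun _ _ c =>
  if pieceVal vB (altPiece k c false) < pieceVal vB (altPiece k c true) then true
  else if pieceVal vB (altPiece k c true) < pieceVal vB (altPiece k c false) then false
  else if pieceVal vA (altPiece k c true) ≤ pieceVal vA (altPiece k c false) then true
  else false

/-- Alice's strategy always produces valid cut vectors. -/
def AliceValid (k : ℕ) (SA : AliceStrategy k) : Prop := ∀ T h, ValidCuts k (SA T h)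


theorem dens_integrable {δ Δ : ℝ} {v : ℝ → ℝ} (h : IsValueDensity δ Δ v) :
    IntegrableOn v (Set.Icc (0:ℝ) 1) := by
  obtain ⟨hm, hb, -⟩ := h
  refine Measure.integrableOn_of_bounded (M := max |δ| |Δ|) (by simp) hm.aestronglyMeasurable ?_
  filter_upwards [ae_restrict_mem measurableSet_Icc] with x hx
  exact abs_le_max_abs_abs (hb x hx).1 (hb x hx).2

/-- Cumulative value. -/
def cumVal (v : ℝ → ℝ) (x : ℝ) : ℝ := ∫ t in (0:ℝ)..x, v t

theorem dens_ii {δ Δ : ℝ} {v : ℝ → ℝ} (h : IsValueDensity δ Δ v) {x y : ℝ}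
    (hx : 0 ≤ x) (hxy : x ≤ y) (hy : y ≤ 1) : IntervalIntegrable v volume x y := by
  rw [intervalIntegrable_iff_integrableOn_Icc_of_le hxy]
  exact (dens_integrable h).mono_set (Set.Icc_subset_Icc hx hy)

theorem cumVal_sub {δ Δ : ℝ} {v : ℝ → ℝ} (h : IsValueDensity δ Δ v) {x y : ℝ}
    (hx : 0 ≤ x) (hxy : x ≤ y) (hy : y ≤ 1) :
    cumVal v y - cumVal v x = ∫ t in Set.Icc x y, v t := by
  unfold cumVal
  rw [intervalIntegral.integral_interval_sub_left, intervalIntegral.integral_of_le hxy,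
    integral_Icc_eq_integral_Ioc]
  · exact dens_ii h le_rfl (hx.trans hxy) hy
  · exact dens_ii h le_rfl hx (hxy.trans hy)

theorem cumVal_total {δ Δ : ℝ} {v : ℝ → ℝ} (h : IsValueDensity δ Δ v) :
    cumVal v 1 - cumVal v 0 = 1 := by
  rw [cumVal_sub h le_rfl zero_le_one le_rfl, h.2.2]

theorem cumVal_bounds {δ Δ : ℝ} {v : ℝ → ℝ} (h : IsValueDensity δ Δ v) (x y : ℝ)
    (hx : 0 ≤ x) (hxy : x ≤ y) (hy : y ≤ 1) :
    δ * (y - x) ≤ cumVal v y - cumVal v x ∧ cumVal v y - cumVal v x ≤ Δ * (y - x) := by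
  have hi := dens_ii h hx hxy hy
  have e : cumVal v y - cumVal v x = ∫ t in x..y, v t := by
    rw [cumVal_sub h hx hxy hy, intervalIntegral.integral_of_le hxy, integral_Icc_eq_integral_Ioc]
  rw [e]
  constructor
  · have := intervalIntegral.integral_mono_on hxy (intervalIntegrable_const (c := δ)) hi
      (fun t ht => (h.2.1 t ⟨hx.trans ht.1, ht.2.trans hy⟩).1)
    simp at this
    linarith
  · have := intervalIntegral.integral_mono_on hxy hi (intervalIntegrable_const (c := Δ))
      (fun t ht => (h.2.1 t ⟨hx.trans ht.1, ht.2.trans hy⟩).2)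
    simp at this
    linarith

/-- Value of the pieces in terms of the cumulative value. -/
def pval (F : ℝ → ℝ) (x y : ℝ) (b : Bool) : ℝ := if b then 1 - (F y - F x) else F y - F x

theorem pieceVal_eq {δ Δ : ℝ} {v : ℝ → ℝ} (h : IsValueDensity δ Δ v) (c : Fin 2 → ℝ)
    (hc : ValidCuts 2 c) (b : Bool) :
    pieceVal v (altPiece 2 c b) = pval (cumVal v) (c 0) (c 1) b := by
  have h01 : c 0 ≤ c 1 := hc.1 (by decide)
  have h0 := (hc.2 0).1
  have h1 := (hc.2 1).2
  cases b
  · have : altPiece 2 c false = Set.Icc (c 0) (c 1) := by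
      simp [altPiece, Finset.range_add_one, extCuts]
    rw [this]
    simp only [pieceVal, pval]
    rw [← cumVal_sub h h0 h01 h1]; simp
  · have : altPiece 2 c true = Set.Icc (c 1) 1 ∪ Set.Icc 0 (c 0) := by
      simp [altPiece, Finset.range_add_one, extCuts]
    rw [this]
    simp only [pieceVal, pval]
    have hd : AEDisjoint volume (Set.Icc (c 1) 1) (Set.Icc 0 (c 0)) := by
      refine measure_mono_null (t := {c 0}) ?_ (by simp)
      rintro z ⟨hz1, hz2⟩
      exact le_antisymm hz2.2 (h01.trans hz1.1)
    rw [setIntegral_union₀ hd measurableSet_Icc.nullMeasurableSet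
      ((dens_integrable h).mono_set (Set.Icc_subset_Icc (h0.trans h01) le_rfl))
      ((dens_integrable h).mono_set (Set.Icc_subset_Icc le_rfl (h01.trans h1))),
      ← cumVal_sub h (h0.trans h01) h1 le_rfl, ← cumVal_sub h le_rfl h0 (h01.trans h1)]
    have := cumVal_total h
    simp
    linarith

theorem grid_lemma {δ Δ : ℝ} (hδ : 0 < δ) (hδΔ : δ ≤ Δ) (FA FB : ℝ → ℝ)
    (hA : ∀ x y, 0 ≤ x → x ≤ y → y ≤ 1 → δ * (y - x) ≤ FA y - FA x ∧ FA y - FA x ≤ Δ * (y - x))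
    (hB : ∀ x y, 0 ≤ x → x ≤ y → y ≤ 1 → δ * (y - x) ≤ FB y - FB x ∧ FB y - FB x ≤ Δ * (y - x))
    (hB1 : FB 1 - FB 0 = 1) (n : ℕ) (hn : 0 < n) (hδn : δ / n ≤ 1 / 2)
    (x y : ℝ) (hx : 0 ≤ x) (hxy : x ≤ y) (hy : y ≤ 1) (b : Bool)
    (hb : 1 / 2 ≤ pval FB x y (!b)) :
    ∃ i j : ℕ, i ≤ j ∧ j ≤ n ∧ 1 / 2 + δ / n ≤ pval FB (i / n) (j / n) (!b) ∧
      pval FA x y b ≤ pval FA (i / n) (j / n) b + 4 * Δ / n := by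
  have hn' : (0:ℝ) < n := by exact_mod_cast hn
  have hxn : 0 ≤ x * n := by positivity
  have hyn : 0 ≤ y * n := mul_nonneg (hx.trans hxy) hn'.le
  have fx1 := Nat.floor_le hxn
  have fx2 := Nat.lt_floor_add_one (x * n)
  have fy1 := Nat.floor_le hyn
  have fy2 := Nat.lt_floor_add_one (y * n)
  have hynn : y * n ≤ n := by nlinarith
  have hfl : ⌊x * n⌋₊ ≤ ⌊y * n⌋₊ := Nat.floor_le_floor (by gcongr)
  have hyn2 : ⌊y * n⌋₊ ≤ n := by
    have := fy1.trans hynn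
    exact_mod_cast this
  generalize ⌊x * n⌋₊ = p at *
  generalize ⌊y * n⌋₊ = q at *
  have hΔ : 0 < Δ := hδ.trans_le hδΔ
  cases b
  · simp only [pval, Bool.not_false, if_true] at *
    by_cases hij : p + 2 ≤ q - 1
    · refine ⟨p + 2, q - 1, hij, by omega, ?_, ?_⟩
      all_goals
        have eq1 : ((q - 1 : ℕ) : ℝ) = q - 1 := by push_cast [show 1 ≤ q by omega]; ring
        have hij' : ((p + 2 : ℕ) : ℝ) ≤ ((q - 1 : ℕ) : ℝ) := by exact_mod_cast hij
        have e2 : x + 1 / n ≤ ((p + 2 : ℕ) : ℝ) / n := by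
          rw [le_div_iff₀ hn']; push_cast; field_simp; linarith
        have e3 : ((p + 2 : ℕ) : ℝ) / n ≤ x + 2 / n := by
          rw [div_le_iff₀ hn']; push_cast; field_simp; linarith
        have e4 : ((q - 1 : ℕ) : ℝ) / n ≤ y := by
          rw [div_le_iff₀ hn', eq1]; linarith
        have e5 : y - 2 / n ≤ ((q - 1 : ℕ) : ℝ) / n := by
          rw [le_div_iff₀ hn', eq1]; field_simp; linarith
        have e6 : ((p + 2 : ℕ) : ℝ) / n ≤ ((q - 1 : ℕ) : ℝ) / n := by gcongr
        generalize ((p + 2 : ℕ) : ℝ) / n = X at *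
        generalize ((q - 1 : ℕ) : ℝ) / n = Y at *
        have hp : (0:ℝ) < 1 / n := by positivity
        have ed : δ / n = δ * (1 / n) := by ring
        have ed2 : 4 * Δ / n = Δ * (2 / n) + Δ * (2 / n) := by ring
      · have a1 := hB x X hx (by linarith) (by linarith)
        have a2 := hB Y y (by linarith) e4 hy
        have : δ * (1 / n) ≤ δ * (X - x) := by gcongr; linarith
        have : 0 ≤ δ * (y - Y) := mul_nonneg hδ.le (by linarith)
        simp at *
        linarith
      · have a1 := hA x X hx (by linarith) (by linarith)
        have a2 := hA Y y (by linarith) e4 hy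
        have : Δ * (X - x) ≤ Δ * (2 / n) := by gcongr; linarith
        have : Δ * (y - Y) ≤ Δ * (2 / n) := by gcongr; linarith
        simp at *
        linarith
    · refine ⟨0, 0, le_rfl, by omega, ?_, ?_⟩
      · simp at *; linarith
      · have a1 := (hA x y hx hxy hy).2
        have hq : q ≤ p + 2 := by omega
        have hq' : (q : ℝ) ≤ p + 2 := by exact_mod_cast hq
        have : y - x ≤ 4 / n := by
          rw [le_div_iff₀ hn']; linarith
        have : Δ * (y - x) ≤ Δ * (4 / n) := by gcongr
        have ed2 : 4 * Δ / n = Δ * (4 / n) := by ring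
        simp at *
        linarith
  · simp only [pval, Bool.not_true, if_true] at *
    refine ⟨p - 1, min n (q + 2), by omega, by omega, ?_, ?_⟩
    all_goals
      have hp : (0:ℝ) < 1 / n := by positivity
      have ed : δ / n = δ * (1 / n) := by ring
      have ed2 : 4 * Δ / n = Δ * (2 / n) + Δ * (2 / n) := by ring
      have i1 : ((p - 1 : ℕ) : ℝ) ≤ p := by exact_mod_cast Nat.sub_le p 1
      have i2 : (p : ℝ) ≤ ((p - 1 : ℕ) : ℝ) + 1 := by exact_mod_cast (by omega : p ≤ p - 1 + 1)
      have j1 : ((min n (q + 2) : ℕ) : ℝ) ≤ q + 2 := by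
        exact_mod_cast (by omega : min n (q+2) ≤ q + 2)
      have j2 : ((min n (q + 2) : ℕ) : ℝ) ≤ n := by
        exact_mod_cast (by omega : min n (q+2) ≤ n)
      have e1 : ((p - 1 : ℕ) : ℝ) / n ≤ x := by rw [div_le_iff₀ hn']; linarith
      have e2 : x - 2 / n ≤ ((p - 1 : ℕ) : ℝ) / n := by
        rw [le_div_iff₀ hn']; field_simp; linarith
      have e3 : y ≤ ((min n (q + 2) : ℕ) : ℝ) / n := by
        rw [le_div_iff₀ hn']
        rcases min_choice n (q + 2) with h | h <;> rw [h]
        · exact hynn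
        · push_cast; linarith
      have e4 : ((min n (q + 2) : ℕ) : ℝ) / n ≤ y + 2 / n := by
        rw [div_le_iff₀ hn']; field_simp; linarith
      have e5 : ((min n (q + 2) : ℕ) : ℝ) / n ≤ 1 := by rw [div_le_one hn']; exact j2
      have e6 : 0 ≤ ((p - 1 : ℕ) : ℝ) / n := by positivity
      have e7 : p - 1 ≠ 0 → ((p - 1 : ℕ) : ℝ) / n ≤ x - 1 / n := by
        intro h
        have eq1 : ((p - 1 : ℕ) : ℝ) = p - 1 := by push_cast [show 1 ≤ p by omega]; ring
        rw [div_le_iff₀ hn', eq1]; field_simp; linarith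
      have e8 : min n (q + 2) ≠ n → y + 1 / n ≤ ((min n (q + 2) : ℕ) : ℝ) / n := by
        intro h
        rw [le_div_iff₀ hn', (min_choice n (q + 2)).resolve_left h]
        push_cast; field_simp; linarith
    · have a1 := hB _ x e6 e1 (hxy.trans hy)
      have a2 := hB y _ (hx.trans hxy) e3 e5
      by_cases h1 : p - 1 = 0
      · by_cases h2 : min n (q + 2) = n
        · rw [h1, h2, div_self hn'.ne']
          simp at *; linarith
        · have e8 := e8 h2
          generalize ((p - 1 : ℕ) : ℝ) / n = X at *
          generalize ((min n (q + 2) : ℕ) : ℝ) / n = Y at *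
          have : δ * (1 / n) ≤ δ * (Y - y) := by gcongr; linarith
          have : 0 ≤ δ * (x - X) := mul_nonneg hδ.le (by linarith)
          simp at hb ⊢
          linarith
      · have e7 := e7 h1
        generalize ((p - 1 : ℕ) : ℝ) / n = X at *
        generalize ((min n (q + 2) : ℕ) : ℝ) / n = Y at *
        have : δ * (1 / n) ≤ δ * (x - X) := by gcongr; linarith
        have : 0 ≤ δ * (Y - y) := mul_nonneg hδ.le (by linarith)
        simp at hb ⊢
        linarith
    · have a1 := hA _ x e6 e1 (hxy.trans hy)
      have a2 := hA y _ (hx.trans hxy) e3 e5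
      generalize ((p - 1 : ℕ) : ℝ) / n = X at *
      generalize ((min n (q + 2) : ℕ) : ℝ) / n = Y at *
      have : Δ * (Y - y) ≤ Δ * (2 / n) := by gcongr; linarith
      have : Δ * (x - X) ≤ Δ * (2 / n) := by gcongr; linarith
      linarith

/-- Arms: a pair of grid cut points and the piece intended for Alice. -/
abbrev Arm (n : ℕ) := Fin (n + 1) × Fin (n + 1) × Bool

/-- The cut vector of an arm. -/
def armCut (n : ℕ) (a : Arm n) : Fin 2 → ℝ :=
  ![((a.1 : ℕ) : ℝ) / n, ((max (a.1 : ℕ) (a.2.1 : ℕ) : ℕ) : ℝ) / n]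

theorem armCut_valid (n : ℕ) (a : Arm n) : ValidCuts 2 (armCut n a) := by
  have key : ∀ k : ℕ, k ≤ n → (k : ℝ) / n ∈ Set.Icc (0:ℝ) 1 := by
    intro k hk
    refine ⟨by positivity, div_le_one_of_le₀ (by exact_mod_cast hk) (by positivity)⟩
  have h1 : (a.1 : ℕ) ≤ n := by omega
  have h2 : (a.2.1 : ℕ) ≤ n := by omega
  constructor
  · rw [Fin.monotone_iff_le_succ]
    intro i
    fin_cases i
    simp only [armCut]
    have : ((a.1 : ℕ) : ℝ) ≤ ((max (a.1 : ℕ) (a.2.1 : ℕ) : ℕ) : ℝ) := by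
      exact_mod_cast le_max_left _ _
    simpa using div_le_div_of_nonneg_right this (Nat.cast_nonneg n)
  · intro i
    fin_cases i
    · exact key _ h1
    · exact key _ (max_le h1 h2)

/-- Number of past rounds where Bob took the piece intended for Alice by arm `a`. -/
def devs (n : ℕ) (a : Arm n) (h : Hist 2) : ℕ :=
  h.countP (fun e => decide (e = (armCut n a, a.2.2)))

/-- Arms not eliminated yet. -/
def elig (n m : ℕ) (h : Hist 2) : Finset (Arm n) :=
  Finset.univ.filter (fun a => devs n a h < m)

/-- Best remaining arm for Alice. -/
def bestArm (vA : ℝ → ℝ) (n m : ℕ) (h : Hist 2) : Arm n :=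
  if hne : (elig n m h).Nonempty then
    ((elig n m h).exists_max_image
      (fun a => pieceVal vA (altPiece 2 (armCut n a) a.2.2)) hne).choose
  else default

theorem bestArm_spec (vA : ℝ → ℝ) (n m : ℕ) (h : Hist 2) (o : Arm n) (ho : devs n o h < m) :
    devs n (bestArm vA n m h) h < m ∧
      pieceVal vA (altPiece 2 (armCut n o) o.2.2) ≤
        pieceVal vA (altPiece 2 (armCut n (bestArm vA n m h)) (bestArm vA n m h).2.2) := by
  have ho' : o ∈ elig n m h := by simp [elig, ho]
  have hne : (elig n m h).Nonempty := ⟨o, ho'⟩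
  have := ((elig n m h).exists_max_image
      (fun a => pieceVal vA (altPiece 2 (armCut n a) a.2.2)) hne).choose_spec
  rw [bestArm, dif_pos hne]
  refine ⟨?_, this.2 o ho'⟩
  have h1 := this.1
  simpa [elig] using h1

/-- Grid size. -/
def gridN (T : ℕ) : ℕ := ⌊Real.log T⌋₊ + 1

/-- Elimination threshold. -/
def capM (T : ℕ) : ℕ := ⌈(T : ℝ) / (gridN T : ℝ) ^ 3⌉₊

/-- Alice's strategy. -/
def elimStrategy (vA : ℝ → ℝ) : AliceStrategy 2 := fun T h =>
  armCut (gridN T) (bestArm vA (gridN T) (capM T) h)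

theorem devs_succ (SA : AliceStrategy 2) (SB : BobStrategy 2) (T t n : ℕ) (a : Arm n) :
    devs n a (playHist 2 SA SB T (t + 1)) = devs n a (playHist 2 SA SB T t) +
      if (roundCuts 2 SA SB T t, roundChoice 2 SA SB T t) = (armCut n a, a.2.2) then 1 else 0 := by
  simp only [playHist, devs, List.countP_append, List.countP_singleton, roundCuts, roundChoice,
    decide_eq_true_eq]
  congr 1

theorem pval_not (F : ℝ → ℝ) (x y : ℝ) (b : Bool) : pval F x y b = 1 - pval F x y (!b) := by
  cases b <;> simp [pval]

theorem devs_mono (SA : AliceStrategy 2) (SB : BobStrategy 2) (T n : ℕ) (a : Arm n) :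
    Monotone (fun t => devs n a (playHist 2 SA SB T t)) := by
  refine monotone_nat_of_le_succ fun t => ?_
  show devs n a _ ≤ devs n a _
  rw [devs_succ]; omega

theorem bob_devs {vB : ℝ → ℝ} {δ Δ : ℝ} (hvB : IsValueDensity δ Δ vB)
    (SA : AliceStrategy 2) (SB : BobStrategy 2) (T n : ℕ) (o : Arm n) (ε : ℝ)
    (ho : 1 / 2 + ε ≤ pieceVal vB (altPiece 2 (armCut n o) (!o.2.2))) (t : ℕ) :
    2 * ε * devs n o (playHist 2 SA SB T t) ≤ ∑ s ∈ Finset.range t,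
    (max (pieceVal vB (altPiece 2 (roundCuts 2 SA SB T s) true))
        (pieceVal vB (altPiece 2 (roundCuts 2 SA SB T s) false)) -
      pieceVal vB (altPiece 2 (roundCuts 2 SA SB T s) (roundChoice 2 SA SB T s))) := by
  induction t with
  | zero => simp [playHist, devs]
  | succ t ih =>
    rw [Finset.sum_range_succ, devs_succ]
    have hmax : ∀ b' b : Bool, 0 ≤ max (pieceVal vB (altPiece 2 (roundCuts 2 SA SB T t) true))
        (pieceVal vB (altPiece 2 (roundCuts 2 SA SB T t) false)) -
        pieceVal vB (altPiece 2 (roundCuts 2 SA SB T t) b) := by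
      intro _ b
      cases b
      · simp
      · simp
    split_ifs with hc
    · have hc1 : roundCuts 2 SA SB T t = armCut n o := (Prod.ext_iff.1 hc).1
      have hc2 : roundChoice 2 SA SB T t = o.2.2 := (Prod.ext_iff.1 hc).2
      have h1 := hmax true (!o.2.2)
      rw [hc2]
      rw [hc1] at h1 ⊢
      have e1 := pieceVal_eq hvB _ (armCut_valid n o) o.2.2
      have e2 := pieceVal_eq hvB _ (armCut_valid n o) (!o.2.2)
      rw [pval_not, ← e2] at e1
      push_cast
      linarith
    · have := hmax true (roundChoice 2 SA SB T t)
      push_cast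
      linarith

theorem arm_exists {δ Δ : ℝ} (hδ : 0 < δ) (hδΔ : δ ≤ Δ) {vA vB : ℝ → ℝ}
    (hvA : IsValueDensity δ Δ vA) (hvB : IsValueDensity δ Δ vB) (n : ℕ) (hn : 0 < n)
    (hδn : δ / n ≤ 1 / 2) (c : Fin 2 → ℝ) (b : Bool) (hc : ValidCuts 2 c)
    (hb : 1 / 2 ≤ pieceVal vB (altPiece 2 c (!b))) :
    ∃ o : Arm n, 1 / 2 + δ / n ≤ pieceVal vB (altPiece 2 (armCut n o) (!o.2.2)) ∧
      pieceVal vA (altPiece 2 c b) ≤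
        pieceVal vA (altPiece 2 (armCut n o) o.2.2) + 4 * Δ / n := by
  rw [pieceVal_eq hvB c hc] at hb
  obtain ⟨i, j, hij, hj, h1, h2⟩ := grid_lemma hδ hδΔ (cumVal vA) (cumVal vB)
    (cumVal_bounds hvA) (cumVal_bounds hvB) (cumVal_total hvB) n hn hδn (c 0) (c 1)
    (hc.2 0).1 (hc.1 (by decide)) (hc.2 1).2 b hb
  refine ⟨(⟨i, by omega⟩, ⟨j, by omega⟩, b), ?_, ?_⟩
  · rw [pieceVal_eq hvB _ (armCut_valid n _)]
    simpa [armCut, max_eq_right hij] using h1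
  · rw [pieceVal_eq hvA _ (armCut_valid n _), pieceVal_eq hvA c hc]
    simpa [armCut, max_eq_right (Nat.cast_le (α := ℝ).2 hij)] using h2

theorem pieceVal_mem {δ Δ : ℝ} (hδ : 0 < δ) {v : ℝ → ℝ}
    (hv : IsValueDensity δ Δ v) (c : Fin 2 → ℝ) (b : Bool) (hc : ValidCuts 2 c) :
    0 ≤ pieceVal v (altPiece 2 c b) ∧ pieceVal v (altPiece 2 c b) ≤ 1 := by
  rw [pieceVal_eq hv c hc]
  have h01 : c 0 ≤ c 1 := hc.1 (by decide)
  have h0 := (hc.2 0).1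
  have h1 := (hc.2 1).2
  have a1 := (cumVal_bounds hv 0 (c 0) le_rfl h0 (h01.trans h1)).1
  have a2 := (cumVal_bounds hv (c 0) (c 1) h0 h01 h1).1
  have a3 := (cumVal_bounds hv (c 1) 1 (h0.trans h01) h1 le_rfl).1
  have a4 := cumVal_total hv
  have b1 : 0 ≤ δ * (c 0 - 0) := mul_nonneg hδ.le (by linarith)
  have b2 : 0 ≤ δ * (c 1 - c 0) := mul_nonneg hδ.le (by linarith)
  have b3 : 0 ≤ δ * (1 - c 1) := mul_nonneg hδ.le (by linarith)
  cases b <;> simp [pval] <;> constructor <;> linarith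

/-- Finite-horizon regret bound. -/
theorem regret_bound {δ Δ : ℝ} (hδ : 0 < δ) (hδΔ : δ ≤ Δ) {vA vB : ℝ → ℝ}
    (hvA : IsValueDensity δ Δ vA) (hvB : IsValueDensity δ Δ vB) (SB : BobStrategy 2) (T : ℕ)
    (R : ℝ) (hR : bobRegret 2 vB (elimStrategy vA) SB T ≤ R)
    (hδn : δ / gridN T ≤ 1 / 2) (hRm : R < 2 * (δ / gridN T) * capM T) :
    aliceRegret 2 vA vB (elimStrategy vA) SB T ≤
      T * (4 * Δ / gridN T) + capM T * (2 * (gridN T + 1) ^ 2) := by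
  have hn : 0 < gridN T := Nat.succ_pos _
  have hn' : (0:ℝ) < gridN T := by exact_mod_cast hn
  have hΔ : 0 < Δ := hδ.trans_le hδΔ
  set SA := elimStrategy vA with hSA
  let arm : ℕ → Arm (gridN T) := fun t =>
    bestArm vA (gridN T) (capM T) (playHist 2 SA SB T t)
  have hcut : ∀ t, roundCuts 2 SA SB T t = armCut (gridN T) (arm t) := fun t => rfl
  have hsurv : ∀ o : Arm (gridN T),
      1 / 2 + δ / gridN T ≤ pieceVal vB (altPiece 2 (armCut (gridN T) o) (!o.2.2)) →
      ∀ t ≤ T, devs (gridN T) o (playHist 2 SA SB T t) < capM T := by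
    intro o ho t ht
    refine lt_of_le_of_lt (devs_mono SA SB T (gridN T) o ht) ?_
    have h1 := (bob_devs hvB SA SB T (gridN T) o _ ho T).trans hR
    have h2 := h1.trans_lt hRm
    have h3 : (0:ℝ) < 2 * (δ / gridN T) := by positivity
    have h4 := lt_of_mul_lt_mul_left h2 h3.le
    exact_mod_cast h4
  -- existence of a survivor
  have hex : ∃ o : Arm (gridN T),
      1 / 2 + δ / gridN T ≤ pieceVal vB (altPiece 2 (armCut (gridN T) o) (!o.2.2)) := by
    have hv : ValidCuts 2 ![0, 1] := by
      constructor
      · rw [Fin.monotone_iff_le_succ]; intro i; fin_cases i; simp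
      · intro i; fin_cases i <;> simp
    obtain ⟨o, ho, -⟩ := arm_exists hδ hδΔ hvA hvB (gridN T) hn hδn ![0, 1] true hv (by
      rw [pieceVal_eq hvB _ hv]
      have := cumVal_total hvB
      simp [pval]
      norm_num at this ⊢
      linarith)
    exact ⟨o, ho⟩
  obtain ⟨o₀, ho₀⟩ := hex
  have helig : ∀ t ≤ T, devs (gridN T) (arm t) (playHist 2 SA SB T t) < capM T := fun t ht =>
    (bestArm_spec vA (gridN T) (capM T) _ o₀ (hsurv o₀ ho₀ t ht)).1
  have hstack : ∀ t ≤ T, stackelbergValue 2 vA vB ≤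
      pieceVal vA (altPiece 2 (armCut (gridN T) (arm t)) (arm t).2.2) + 4 * Δ / gridN T := by
    intro t ht
    refine Real.sSup_le ?_ ?_
    · rintro u ⟨c, b, hc, hb, rfl⟩
      obtain ⟨o, ho, ho2⟩ := arm_exists hδ hδΔ hvA hvB (gridN T) hn hδn c b hc hb
      have := (bestArm_spec vA (gridN T) (capM T) _ o (hsurv o ho t ht)).2
      exact ho2.trans (by gcongr)
    · have := (pieceVal_mem hδ hvA _ (arm t).2.2 (armCut_valid (gridN T) (arm t))).1
      positivity
  let dev : ℕ → Prop := fun t => roundChoice 2 SA SB T t = (arm t).2.2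
  have hcount : ∀ a : Arm (gridN T), ∀ t ≤ T,
      ((Finset.range t).filter (fun s => dev s ∧ arm s = a)).card ≤
        devs (gridN T) a (playHist 2 SA SB T t) ∧
      ((Finset.range t).filter (fun s => dev s ∧ arm s = a)).card ≤ capM T := by
    intro a t
    induction t with
    | zero => intro _; simp
    | succ t ih =>
      intro ht
      obtain ⟨i1, i2⟩ := ih (by omega)
      rw [Finset.range_add_one, Finset.filter_insert, devs_succ]
      by_cases hd : dev t ∧ arm t = a
      · have hlt := helig t (by omega)
        rw [hd.2] at hlt
        have he : (roundCuts 2 SA SB T t, roundChoice 2 SA SB T t) =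
            (armCut (gridN T) a, a.2.2) := by
          have h1 := hd.1
          simp only [dev] at h1
          rw [hcut, h1, hd.2]
        rw [if_pos hd, if_pos he, Finset.card_insert_of_notMem (by simp)]
        omega
      · rw [if_neg hd]
        omega
  have hdev : ((Finset.range T).filter dev).card ≤ capM T * (2 * (gridN T + 1) ^ 2) := by
    have := Finset.card_le_mul_card_image_of_maps_to (s := (Finset.range T).filter dev)
      (t := (Finset.univ : Finset (Arm (gridN T)))) (f := arm) (fun _ _ => Finset.mem_univ _)
      (capM T) (fun a _ => by
        rw [Finset.filter_filter]
        exact (hcount a T le_rfl).2)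
    refine this.trans (le_of_eq ?_)
    simp [Finset.card_univ]
    left; ring
  have hround : ∀ t ∈ Finset.range T, stackelbergValue 2 vA vB -
      pieceVal vA (altPiece 2 (roundCuts 2 SA SB T t) (!(roundChoice 2 SA SB T t))) ≤
      4 * Δ / gridN T + if dev t then 1 else 0 := by
    intro t ht
    have hs := hstack t (Finset.mem_range.1 ht).le
    rw [hcut]
    split_ifs with hd
    · have h1 := (pieceVal_mem hδ hvA _ (arm t).2.2 (armCut_valid (gridN T) (arm t))).2
      have h2 := (pieceVal_mem hδ hvA _ (!(roundChoice 2 SA SB T t))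
        (armCut_valid (gridN T) (arm t))).1
      linarith
    · have : (!(roundChoice 2 SA SB T t)) = (arm t).2.2 := by
        simp only [dev] at hd
        revert hd
        cases roundChoice 2 SA SB T t <;> cases (arm t).2.2 <;> simp
      rw [this]
      linarith
  unfold aliceRegret
  refine (Finset.sum_le_sum hround).trans ?_
  rw [Finset.sum_add_distrib, Finset.sum_const, Finset.card_range, nsmul_eq_mul,
    Finset.sum_boole]
  gcongr
  exact_mod_cast hdev

theorem eventually_params (δ : ℝ) (hδ : 0 < δ) (α : ℝ) (hα : α < 1) (c : ℝ) (hc : 0 < c) :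
    ∃ T₀ : ℕ, ∀ T : ℕ, T₀ ≤ T → 1 ≤ Real.log T ∧ 2 * δ ≤ Real.log T ∧
      8 * Real.log T ^ 3 ≤ T ∧ c * (T : ℝ) ^ α * (16 * Real.log T ^ 4) ≤ δ * T := by
  have hlog := Real.tendsto_log_atTop
  have h3 := (Real.isLittleO_pow_log_id_atTop (n := 3)).bound (show (0:ℝ) < 1 / 8 by norm_num)
  have h4 := (isLittleO_log_rpow_rpow_atTop (s := 1 - α) 4 (by linarith)).bound
    (show (0:ℝ) < δ / (16 * c) by positivity)
  have hall := (hlog.eventually_ge_atTop 1).and ((hlog.eventually_ge_atTop (2 * δ)).and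
    (h3.and (h4.and (Filter.eventually_gt_atTop 0))))
  have := (tendsto_natCast_atTop_atTop (R := ℝ)).eventually hall
  obtain ⟨T₀, hT₀⟩ := Filter.eventually_atTop.1 this
  refine ⟨T₀, fun T hT => ?_⟩
  obtain ⟨a1, a2, a3, a4, a5⟩ := hT₀ T hT
  generalize (T : ℝ) = x at *
  refine ⟨a1, a2, ?_, ?_⟩
  · simp only [Real.norm_eq_abs, id] at a3
    rw [abs_of_pos a5] at a3
    have := (le_abs_self _).trans a3
    linarith
  · have e4 : Real.log x ^ (4:ℝ) = Real.log x ^ 4 := by exact_mod_cast Real.rpow_natCast _ 4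
    rw [e4] at a4
    simp only [Real.norm_eq_abs] at a4
    have h5 := (le_abs_self _).trans a4
    rw [abs_of_pos (Real.rpow_pos_of_pos a5 _)] at h5
    have h6 : x ^ α * x ^ (1 - α) = x := by
      rw [← Real.rpow_add a5]; simp
    calc c * x ^ α * (16 * Real.log x ^ 4)
        ≤ c * x ^ α * (16 * (δ / (16 * c) * x ^ (1 - α))) := by
          have := Real.rpow_pos_of_pos a5 α
          gcongr
      _ = δ * (x ^ α * x ^ (1 - α)) := by field_simp
      _ = δ * x := by rw [h6]

/-- 2 cuts, non-myopic Bob with private learning rate, upper bound: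
for every Alice value density there is a deterministic Alice strategy, independent of `α`
and `c`, such that for every `α < 1` and `c > 0` there are `C > 0` and `T₀` with: against
every Bob value density and every Bob strategy guaranteeing regret at most `c·T'^α` for all
horizons, Alice's Stackelberg regret over any horizon `T ≥ T₀` is at most `C·T/log T`. -/
theorem two_cut_private_rate_upper (δ Δ : ℝ) (hδ : 0 < δ) (hδΔ : δ ≤ Δ) :
    ∀ vA : ℝ → ℝ, IsValueDensity δ Δ vA →
      ∃ SA : AliceStrategy 2, AliceValid 2 SA ∧
        ∀ α : ℝ, α < 1 →
          ∀ c : ℝ, 0 < c →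
            ∃ (C : ℝ) (T₀ : ℕ), 0 < C ∧
              ∀ vB : ℝ → ℝ, IsValueDensity δ Δ vB →
                ∀ SB : BobStrategy 2,
                  BobGuarantees 2 vB SB (fun T' => c * (T' : ℝ) ^ α) →
                  ∀ T : ℕ, T₀ ≤ T →
                    aliceRegret 2 vA vB SA SB T ≤ C * T / Real.log T := by
  intro vA hvA
  have hΔ : 0 < Δ := hδ.trans_le hδΔ
  refine ⟨elimStrategy vA, fun T h => armCut_valid _ _, ?_⟩
  intro α hα c hc
  obtain ⟨T₀, hT₀⟩ := eventually_params δ hδ α hα c hc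
  refine ⟨4 * Δ + 16, T₀, by positivity, ?_⟩
  intro vB hvB SB hSB T hT
  obtain ⟨l1, l2, l3, l4⟩ := hT₀ T hT
  have hTpos : (0:ℝ) < T := by
    have : (0:ℝ) < 8 * Real.log T ^ 3 := by positivity
    linarith
  have hn1 : Real.log T ≤ gridN T := by
    unfold gridN; push_cast; exact (Nat.lt_floor_add_one _).le
  have hn2 : (gridN T : ℝ) ≤ 2 * Real.log T := by
    unfold gridN; push_cast
    have := Nat.floor_le (show 0 ≤ Real.log T by linarith)
    linarith
  have hcap1 : (T : ℝ) / (gridN T : ℝ) ^ 3 ≤ capM T := Nat.le_ceil _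
  have hcap2 : (capM T : ℝ) < (T : ℝ) / (gridN T : ℝ) ^ 3 + 1 :=
    Nat.ceil_lt_add_one (by positivity)
  have hn3 : (1:ℝ) ≤ gridN T := l1.trans hn1
  have hb := regret_bound hδ hδΔ hvA hvB SB T (c * (T : ℝ) ^ α) (hSB _ T)
  generalize (gridN T : ℝ) = n at *
  generalize (capM T : ℝ) = m at *
  have hn0 : 0 < n := by linarith
  have hn4 : n ^ 4 ≤ 16 * Real.log T ^ 4 := by
    calc n ^ 4 ≤ (2 * Real.log T) ^ 4 := by gcongr
      _ = _ := by ring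
  have hn5 : n ^ 3 ≤ T := by
    calc n ^ 3 ≤ (2 * Real.log T) ^ 3 := by gcongr
      _ = 8 * Real.log T ^ 3 := by ring
      _ ≤ T := l3
  refine (hb ?_ ?_).trans ?_
  · rw [div_le_iff₀ hn0]; linarith
  · have hTα : 0 < c * (T : ℝ) ^ α := by positivity
    have h1 : c * (T : ℝ) ^ α * n ^ 4 < 2 * δ * T := by
      have : c * (T : ℝ) ^ α * n ^ 4 ≤ c * (T : ℝ) ^ α * (16 * Real.log T ^ 4) := by gcongr
      have : 0 < δ * T := by positivity
      linarith
    calc c * (T : ℝ) ^ α < 2 * δ * T / n ^ 4 := by rwa [lt_div_iff₀ (by positivity)]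
      _ = 2 * (δ / n) * (T / n ^ 3) := by field_simp
      _ ≤ 2 * (δ / n) * m := by gcongr
  · have h1 : m ≤ 2 * (T / n ^ 3) := by
      have : 1 ≤ T / n ^ 3 := by rwa [le_div_iff₀ (by positivity), one_mul]
      linarith
    have hLpos : 0 < Real.log T := by linarith
    calc (T : ℝ) * (4 * Δ / n) + m * (2 * (n + 1) ^ 2)
        ≤ T * (4 * Δ / n) + 2 * (T / n ^ 3) * (2 * (n + n) ^ 2) := by gcongr
      _ = (4 * Δ + 16) * T / n := by field_simp; ring
      _ ≤ (4 * Δ + 16) * T / Real.log T := by gcongr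

end
end

section
/- There exists n₀ ∈ ℕ (independent of the sequence below) such that: for every sequence a¹, a², a³, … of infinite bit vectors (elements of {0,1}^{ℕ⁺}), there exists an infinite bit vector s ∈ {0,1}^{ℕ⁺} such that for every n ≥ n₀ that is a power of 2 and every i ∈ {1, 2, …, 2·2^{2n}}, the Hamming distance between the first 10n bits of s and the first 10n bits of aⁱ is at least n/2. -/
theorem sum_weight (N : ℕ) (b : Fin N → Bool) :
    ∑ x : Fin N → Bool, ∏ j, (if x j ≠ b j then 1 else 4 : ℕ) = 5 ^ N := by
  have h := Fintype.prod_sum (fun (j : Fin N) (v : Bool) => (if v ≠ b j then 1 else 4 : ℕ))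
  rw [← h]
  have : ∀ j, ∑ v : Bool, (if v ≠ b j then 1 else 4 : ℕ) = 5 := by
    intro j
    cases b j <;> simp
  simp only [this]
  simp

theorem num_bound (n : ℕ) (hn : 3 ≤ n) : 2 * 3125 ^ n < 4096 ^ n := by
  induction n, hn using Nat.le_induction with
  | base => norm_num
  | succ k hk ih =>
    rw [pow_succ, pow_succ]
    omega

theorem weight_ge (n : ℕ) (x b : Fin (5 * n) → Bool)
    (h : 2 * (Finset.univ.filter fun j => x j ≠ b j).card < n) :
    2 ^ (9 * n) ≤ ∏ j, (if x j ≠ b j then 1 else 4 : ℕ) := by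
  rw [Finset.prod_ite]
  simp only [Finset.prod_const, one_pow, one_mul]
  have h2 := Finset.card_filter_add_card_filter_not (s := (Finset.univ : Finset (Fin (5 * n))))
    (fun j => x j ≠ b j)
  rw [Finset.card_univ, Fintype.card_fin] at h2
  rw [show (4 : ℕ) = 2 ^ 2 by norm_num, ← pow_mul]
  apply Nat.pow_le_pow_right (by norm_num)
  omega

theorem block (n : ℕ) (hn : 3 ≤ n) (b : ℕ → Fin (5 * n) → Bool) :
    ∃ x : Fin (5 * n) → Bool, ∀ i, 1 ≤ i → i ≤ 2 * 2 ^ (2 * n) →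
      n ≤ 2 * (Finset.univ.filter fun j => x j ≠ b i j).card := by
  by_contra! hc
  have h1 : ∀ x : Fin (5 * n) → Bool, 2 ^ (9 * n) ≤
      ∑ i ∈ Finset.Icc 1 (2 * 2 ^ (2 * n)), ∏ j, (if x j ≠ b i j then 1 else 4 : ℕ) := by
    intro x
    obtain ⟨i, hi1, hi2, hi⟩ := hc x
    refine (weight_ge n x (b i) hi).trans ?_
    exact Finset.single_le_sum
      (f := fun i => ∏ j, (if x j ≠ b i j then 1 else 4 : ℕ))
      (fun _ _ => Nat.zero_le _) (Finset.mem_Icc.2 ⟨hi1, hi2⟩)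
  have h2 := Finset.sum_le_sum (s := Finset.univ) (fun x _ => h1 x)
  rw [Finset.sum_comm] at h2
  simp only [sum_weight, Finset.sum_const, Finset.card_univ, smul_eq_mul, Nat.card_Icc,
    Fintype.card_fun, Fintype.card_fin, Fintype.card_bool, Nat.add_sub_cancel] at h2
  have h3 := num_bound n hn
  have e1 : 2 ^ (5 * n) * 2 ^ (9 * n) = 2 ^ (2 * n) * 4096 ^ n := by
    rw [show (4096 : ℕ) = 2 ^ 12 by norm_num, ← pow_mul, ← pow_add, ← pow_add]
    congr 1
    ring
  have e2 : 2 * 2 ^ (2 * n) * 5 ^ (5 * n) = 2 ^ (2 * n) * (2 * 3125 ^ n) := by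
    rw [show (3125 : ℕ) = 5 ^ 5 by norm_num, ← pow_mul]
    ring
  rw [e1, e2] at h2
  exact absurd (Nat.le_of_mul_le_mul_left h2 (by positivity)) (by omega)

/-- far bitstring: there is `n₀ ∈ ℕ`, independent of the sequence, such
that for every sequence `a¹, a², …` of infinite bit vectors (indexed by positive integers)
there is an infinite bit vector `s` whose first `10n` bits have Hamming distance at least
`n/2` from the first `10n` bits of every `aⁱ` with `1 ≤ i ≤ 2·2^{2n}`, for every power of
two `n ≥ n₀`.  Bit `j` of a vector `v` (for `j = 1, …, 10n`) is `v (j-1)`, i.e. the first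
`10n` bits are the coordinates in `Finset.range (10n)`; the distance bound `≥ n/2` is
expressed as `n ≤ 2 · (Hamming distance)`. -/
theorem far_bitstring :
    ∃ n₀ : ℕ, ∀ a : ℕ → (ℕ → Bool), ∃ s : ℕ → Bool,
      ∀ n : ℕ, n₀ ≤ n → (∃ m : ℕ, n = 2 ^ m) →
        ∀ i : ℕ, 1 ≤ i → i ≤ 2 * 2 ^ (2 * n) →
          n ≤ 2 * ((Finset.range (10 * n)).filter fun j => s j ≠ a i j).card := by
  classical
  refine ⟨3, fun a => ?_⟩
  have hb : ∀ n : ℕ, ∃ x : Fin (5 * n) → Bool, 3 ≤ n → ∀ i, 1 ≤ i → i ≤ 2 * 2 ^ (2 * n) →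
      n ≤ 2 * (Finset.univ.filter fun j : Fin (5 * n) => x j ≠ a i (5 * n + j)).card := by
    intro n
    by_cases hn : 3 ≤ n
    · obtain ⟨x, hx⟩ := block n hn (fun i j => a i (5 * n + j))
      exact ⟨x, fun _ => hx⟩
    · exact ⟨fun _ => false, fun h => absurd h hn⟩
  choose t ht using hb
  let s : ℕ → Bool := fun k =>
    if h : k - 5 * 2 ^ Nat.log 2 (k / 5) < 5 * 2 ^ Nat.log 2 (k / 5) then
      t (2 ^ Nat.log 2 (k / 5)) ⟨_, h⟩ else false
  have hs : ∀ m (j : Fin (5 * 2 ^ m)), s (5 * 2 ^ m + j) = t (2 ^ m) j := by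
    intro m j
    have hj := j.2
    have hl : Nat.log 2 ((5 * 2 ^ m + j) / 5) = m := by
      apply Nat.log_eq_of_pow_le_of_lt_pow
      · omega
      · rw [pow_succ]; omega
    simp only [s]
    rw [hl]
    simp
  refine ⟨s, ?_⟩
  rintro n hn ⟨m, rfl⟩ i hi1 hi2
  refine (ht _ hn i hi1 hi2).trans (Nat.mul_le_mul_left 2 ?_)
  refine Finset.card_le_card_of_injOn (fun j => 5 * 2 ^ m + j) ?_ ?_
  · intro j hj
    have hj2 := j.2
    simp only [Finset.coe_filter, Finset.mem_univ, true_and, Set.mem_setOf_eq,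
      Finset.mem_range] at hj ⊢
    rw [hs]
    exact ⟨by omega, hj⟩
  · intro j _ k _ h
    apply Fin.ext
    simpa using h
end

section
/- Let n ≥ 2 and suppose the interval [a, b] is partitioned into n consecutive connected regions R₁, …, R_n given by points a = r₀ < r₁ < ⋯ < r_n = b with R_j = [r_{j−1}, r_j], colored alternately: R_j is red if j is odd and blue if j is even. Let m < n − 1 and let a ≤ c₁ ≤ ⋯ ≤ c_m ≤ b be cut points; set c₀ = a and c_{m+1} = b, and let P₁ be the union of the intervals [c_i, c_{i+1}] with i even and P₂ the union of those with i odd (say that a piece P contains a region R_j if the interior of R_j is a subset of P). Then at least one of the following holds: (i) some piece contains both an entire red region and an entire blue region; (ii) both pieces contain an entire region of the same color (i.e., each of P₁ and P₂ contains an entire red region, or each contains an entire blue region). -/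
open Set

/-- alternating regions with too few cuts: if `[a,b]` is partitioned into
`n ≥ 2` consecutive regions `R_j = [r_{j-1}, r_j]` (red for odd `j`, blue for even `j`) and
is split by an alternating partition with `m < n - 1` cuts into pieces `P₁` (even-indexed
intervals) and `P₂` (odd-indexed intervals), then either some piece contains (the interior
of) both a red and a blue region, or both pieces contain a region of the same color. -/
theorem alternating_region_too_few_cuts (a b : ℝ) (hab : a < b)
    (n : ℕ) (hn : 2 ≤ n)
    (r : ℕ → ℝ) (hr0 : r 0 = a) (hrn : r n = b)
    (hrmono : ∀ j < n, r j < r (j + 1))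
    (m : ℕ) (hm : m < n - 1)
    (c : ℕ → ℝ) (hc0 : c 0 = a) (hcend : c (m + 1) = b)
    (hcmono : ∀ i ≤ m, c i ≤ c (i + 1)) :
    -- the two pieces of the alternating partition induced by the cuts
    let P : Bool → Set ℝ := fun s =>
      ⋃ i ∈ Finset.range (m + 1),
        if decide (i % 2 = 0) = s then Set.Icc (c i) (c (i + 1)) else (∅ : Set ℝ)
    -- a piece contains region `R_j` if the interior of `R_j` is a subset of the piece
    let contains : Set ℝ → ℕ → Prop := fun S j => Set.Ioo (r (j - 1)) (r j) ⊆ S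
    -- (i) some piece contains both a red (odd) and a blue (even) region, or
    -- (ii) both pieces contain a region of the same color
    (∃ s : Bool, ∃ j j', 1 ≤ j ∧ j ≤ n ∧ 1 ≤ j' ∧ j' ≤ n ∧ Odd j ∧ Even j' ∧
        contains (P s) j ∧ contains (P s) j') ∨
    (∃ j j', 1 ≤ j ∧ j ≤ n ∧ 1 ≤ j' ∧ j' ≤ n ∧ (Odd j ↔ Odd j') ∧
        contains (P true) j ∧ contains (P false) j') := by
  intro P contains
  have hrle : ∀ k, k ≤ n → ∀ j, j ≤ k → r j ≤ r k := by
    intro k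
    induction k with
    | zero => intro _ j hj; obtain rfl : j = 0 := by omega
              exact le_refl _
    | succ k ih =>
      intro hk j hj
      rcases Nat.lt_or_ge k j with h | h
      · obtain rfl : j = k + 1 := by omega
        exact le_refl _
      · exact (ih (by omega) j h).trans (hrmono k (by omega)).le
  let g : ℕ → ℕ := fun j => Nat.findGreatest (fun i => c i < r j) m
  have hgm : ∀ j, g j ≤ m := fun j => Nat.findGreatest_le m
  have hgmono : ∀ j < n, g j ≤ g (j + 1) := fun j hj =>
    Nat.findGreatest_mono_left (fun i hi => lt_trans hi (hrmono j hj)) m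
  have hgood : ∀ j < n, g (j + 1) = g j →
      contains (P (decide (g (j + 1) % 2 = 0))) (j + 1) := by
    intro j hj hg x hx
    have hx1 : r j < x := by simpa using hx.1
    have hx2 : x < r (j + 1) := hx.2
    have h1 : c (g (j + 1)) ≤ r j := by
      by_cases h0 : g j = 0
      · rw [hg, h0, hc0, ← hr0]
        exact hrle j hj.le 0 (by omega)
      · rw [hg]
        exact (Nat.findGreatest_of_ne_zero (P := fun i => c i < r j) (n := m) rfl h0).le
    have h2 : r (j + 1) ≤ c (g (j + 1) + 1) := by
      rcases Nat.lt_or_ge (g (j + 1)) m with h | h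
      · exact not_lt.mp (Nat.findGreatest_is_greatest (P := fun i => c i < r (j + 1)) (n := m)
          (k := g (j + 1) + 1) (Nat.lt_succ_self _) h)
      · have : g (j + 1) = m := le_antisymm (hgm _) h
        rw [this, hcend, ← hrn]
        exact hrle n le_rfl _ hj
    have h3 := hgm (j + 1)
    refine Set.mem_iUnion₂.mpr ⟨g (j + 1), Finset.mem_range.mpr (by omega), ?_⟩
    rw [if_pos rfl]
    exact ⟨h1.trans hx1.le, hx2.le.trans h2⟩
  by_contra hcon
  rw [not_or] at hcon
  obtain ⟨hA, hB⟩ := hcon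
  -- two uncut regions have equal colour iff they lie in the same piece
  have hpar : ∀ j < n, ∀ k < n, g (j + 1) = g j → g (k + 1) = g k →
      (g (j + 1) + (j + 1)) % 2 = (g (k + 1) + (k + 1)) % 2 := by
    intro j hj k hk hgj hgk
    have cj := hgood j hj hgj
    have ck := hgood k hk hgk
    by_contra hne
    by_cases hp : g (j + 1) % 2 = g (k + 1) % 2
    · rw [← hp] at ck
      rcases Nat.even_or_odd (j + 1) with he | ho
      · refine hA ⟨_, k + 1, j + 1, by omega, by omega, by omega, by omega, ?_, he, ck, cj⟩
        rw [Nat.even_iff] at he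
        rw [Nat.odd_iff]; omega
      · refine hA ⟨_, j + 1, k + 1, by omega, by omega, by omega, by omega, ho, ?_, cj, ck⟩
        rw [Nat.odd_iff] at ho
        rw [Nat.even_iff]; omega
    · rcases Nat.mod_two_eq_zero_or_one (g (j + 1)) with h0 | h0
      · have h1 : ¬ g (k + 1) % 2 = 0 := by omega
        rw [decide_eq_true h0] at cj
        rw [decide_eq_false h1] at ck
        refine hB ⟨j + 1, k + 1, by omega, by omega, by omega, by omega, ?_, cj, ck⟩
        rw [Nat.odd_iff, Nat.odd_iff]; omega
      · have h1 : g (k + 1) % 2 = 0 := by omega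
        have h2 : ¬ g (j + 1) % 2 = 0 := by omega
        rw [decide_eq_false h2] at cj
        rw [decide_eq_true h1] at ck
        refine hB ⟨k + 1, j + 1, by omega, by omega, by omega, by omega, ?_, ck, cj⟩
        rw [Nat.odd_iff, Nat.odd_iff]; omega
  have key : ∀ j ≤ n, j ≤ g j ∨ ∃ k < j, g (k + 1) = g k ∧ k ≤ g (k + 1) ∧
      g (k + 1) + j ≤ g j + (k + 1) := by
    intro j
    induction j with
    | zero => intro _; left; omega
    | succ j ih =>
      intro hj
      have hm1 := hgmono j (by omega)
      by_cases hg : g (j + 1) = g j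
      · rcases ih (by omega) with h | ⟨k, hk, h1, h2, h3⟩
        · right
          exact ⟨j, by omega, hg, by omega, by omega⟩
        · right
          have := hpar j (by omega) k (by omega) hg h1
          exact ⟨k, by omega, h1, h2, by omega⟩
      · rcases ih (by omega) with h | ⟨k, hk, h1, h2, h3⟩
        · left; omega
        · right
          exact ⟨k, by omega, h1, h2, by omega⟩
  have := hgm n
  rcases key n le_rfl with h | ⟨k, hk, h1, h2, h3⟩
  · omega
  · omega
end

section
/- For every integer k ≥ 2: (i) with Alice's value density uniform and Bob's value density σ₀^k, Alice's Stackelberg value in the k-cut game equals 2/3; (ii) for every z ∈ [5/6, 11/12] and w ∈ (0, 1/48], with Alice's value density uniform and Bob's value density σ_{w;z}^k, Alice's Stackelberg value in the k-cut game is at least 2/3 + 4w/(27k). -/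
open MeasureTheory Set

noncomputable section

attribute [local instance] Classical.propDecidable

/-- The common length of the high-value intervals: `ℓ^k = 1/(3(⌊k/2⌋ + 1/2))`. -/
def ell (k : ℕ) : ℝ := 1 / (3 * ((k / 2 : ℕ) + 1 / 2))

/-- The number of high-value intervals: `⌊k/2⌋ + 1`. -/
def nHigh (k : ℕ) : ℕ := k / 2 + 1

/-- The number of low-value intervals: `⌈k/2⌉`. -/
def nLow (k : ℕ) : ℕ := (k + 1) / 2

/-- The common length of the low-value intervals. -/
def lowLen (k : ℕ) : ℝ := (1 - nHigh k * ell k) / nLow k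

/-- Left endpoint of the `j`-th interval (0-indexed; the intervals alternate
high, low, high, …, starting with a high-value interval). -/
def bd (k : ℕ) (j : ℕ) : ℝ := ((j + 1) / 2 : ℕ) * ell k + (j / 2 : ℕ) * lowLen k

/-- The union `H^k` of the high-value intervals (even-indexed). -/
def Hset (k : ℕ) : Set ℝ :=
  ⋃ j ∈ Finset.range (k + 1),
    if j % 2 = 0 then Set.Icc (bd k j) (bd k (j + 1)) else ∅

/-- The union `L^k` of the (interiors of the) low-value intervals (odd-indexed). -/
def Lset (k : ℕ) : Set ℝ :=
  ⋃ j ∈ Finset.range (k + 1),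
    if j % 2 = 1 then Set.Ioo (bd k j) (bd k (j + 1)) else ∅

/-- The density of the low-value region: `(1 - (3/2)μ(H^k))/μ(L^k)`. -/
def lowDens (k : ℕ) : ℝ :=
  (1 - 3 / 2 * (volume (Hset k)).toReal) / (volume (Lset k)).toReal

/-- The unspiked value density `σ₀^k`: `3/2` on `H^k`, `lowDens k` elsewhere. -/
def sigma0 (k : ℕ) : ℝ → ℝ := fun x => if x ∈ Hset k then 3 / 2 else lowDens k

/-- The spiked value density `σ_{w;z}^k`: equal to `2` for `x/ℓ^k ∈ (z-w, z]`, to `1` for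
`x/ℓ^k ∈ (z, z+w)`, and to `σ₀^k(x)` otherwise. -/
def sigmaSpike (k : ℕ) (w z : ℝ) : ℝ → ℝ := fun x =>
  if x / ell k ∈ Set.Ioc (z - w) z then 2
  else if x / ell k ∈ Set.Ioo z (z + w) then 1
  else sigma0 k x

/-! ### Helper lemmas -/

lemma aux_union (f : ℝ → ℝ) (hf : ∀ a b, IntegrableOn f (Set.Icc a b)) (e : ℕ → ℝ)
    (he : Monotone e) (P : ℕ → Prop) (S : ℕ → Set ℝ)
    (hS : ∀ i, P i → S i = Set.Icc (e i) (e (i+1))) (hS' : ∀ i, ¬ P i → S i = ∅) (n : ℕ) :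
    IntegrableOn f (⋃ i ∈ Finset.range n, S i) ∧
    (⋃ i ∈ Finset.range n, S i) ⊆ Set.Iic (e n) ∧
    ∫ x in (⋃ i ∈ Finset.range n, S i), f x
      = ∑ i ∈ Finset.range n, if P i then ∫ x in (e i)..(e (i+1)), f x else 0 := by
  induction n with
  | zero => simp
  | succ n ih =>
    obtain ⟨h1, h2, h3⟩ := ih
    have hU : (⋃ i ∈ Finset.range (n+1), S i) = (⋃ i ∈ Finset.range n, S i) ∪ S n := by
      rw [Finset.range_add_one, Finset.set_biUnion_insert, Set.union_comm]
    rw [hU, Finset.sum_range_succ, ← h3]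
    by_cases hP : P n
    · rw [hS n hP]
      refine ⟨h1.union (hf _ _), ?_, ?_⟩
      · apply Set.union_subset
        · exact h2.trans (Set.Iic_subset_Iic.2 (he (Nat.le_succ n)))
        · exact Set.Icc_subset_Iic_self
      · have hd : AEDisjoint volume (⋃ i ∈ Finset.range n, S i) (Set.Icc (e n) (e (n+1))) := by
          apply measure_mono_null (t := {e n})
          · rintro x ⟨hx1, hx2⟩
            exact le_antisymm (h2 hx1) hx2.1
          · simp
        rw [setIntegral_union₀ hd measurableSet_Icc.nullMeasurableSet h1 (hf _ _), if_pos hP,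
          intervalIntegral.integral_of_le (he (Nat.le_succ n)), integral_Icc_eq_integral_Ioc]
    · rw [hS' n hP, if_neg hP]
      simp only [Set.union_empty, add_zero]
      exact ⟨h1, h2.trans (Set.Iic_subset_Iic.2 (he (Nat.le_succ n))), trivial⟩

lemma extCuts_mono {k : ℕ} {c : Fin k → ℝ} (hc : ValidCuts k c) : Monotone (extCuts k c) := by
  apply monotone_nat_of_le_succ
  intro n
  unfold extCuts
  rcases Nat.eq_zero_or_pos n with rfl | hn
  · by_cases h : 0 < k
    · simpa [h] using (hc.2 ⟨0, h⟩).1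
    · simp [h]
  · have h0 : n ≠ 0 := by omega
    by_cases h : n < k
    · have h' : n - 1 < k := by omega
      simp only [h0, if_false, h', dif_pos, Nat.add_sub_cancel, h, Nat.add_eq_zero_iff, false_and]
      exact hc.1 (by simp)
    · by_cases h' : n - 1 < k
      · simpa [h0, h', h] using (hc.2 ⟨n-1, h'⟩).2
      · simp [h0, h', h]

lemma altPiece_int (k : ℕ) (c : Fin k → ℝ) (hc : ValidCuts k c) (b : Bool) (f : ℝ → ℝ)
    (hf : ∀ a b, IntegrableOn f (Set.Icc a b)) :
    IntegrableOn f (altPiece k c b) ∧ pieceVal f (altPiece k c b)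
      = ∑ i ∈ Finset.range (k+1), if decide (i % 2 = 0) = b then
          ∫ x in (extCuts k c i)..(extCuts k c (i+1)), f x else 0 := by
  have := aux_union f hf (extCuts k c) (extCuts_mono hc) (fun i => decide (i % 2 = 0) = b)
    (fun i => if decide (i % 2 = 0) = b then Set.Icc (extCuts k c i) (extCuts k c (i + 1)) else ∅)
    (fun i hi => if_pos hi) (fun i hi => if_neg hi) (k+1)
  refine ⟨this.1, this.2.2.trans (Finset.sum_congr rfl fun i _ => ?_)⟩
  congr

lemma int_one (a b : ℝ) : IntegrableOn (fun _ : ℝ => (1:ℝ)) (Set.Icc a b) :=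
  integrableOn_const (by simp)

lemma altPiece_total (k : ℕ) (c : Fin k → ℝ) (hc : ValidCuts k c) (b : Bool) :
    pieceVal (fun _ => 1) (altPiece k c b) + pieceVal (fun _ => 1) (altPiece k c (!b)) = 1 := by
  rw [(altPiece_int k c hc b _ int_one).2, (altPiece_int k c hc (!b) _ int_one).2,
    ← Finset.sum_add_distrib]
  have : ∀ i ∈ Finset.range (k+1), ((if decide (i % 2 = 0) = b then
          ∫ x in (extCuts k c i)..(extCuts k c (i+1)), (1:ℝ) else 0) +
      (if decide (i % 2 = 0) = !b then
          ∫ x in (extCuts k c i)..(extCuts k c (i+1)), (1:ℝ) else 0))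
      = extCuts k c (i+1) - extCuts k c i := by
    intro i _
    by_cases h : i % 2 = 0 <;> cases b <;> simp [h]
  rw [Finset.sum_congr rfl this, Finset.sum_range_sub]
  simp [extCuts]

lemma pieceVal_one_nonneg (S : Set ℝ) : 0 ≤ pieceVal (fun _ => 1) S :=
  integral_nonneg (fun _ => zero_le_one)

lemma ell_pos (k : ℕ) : 0 < ell k := by unfold ell; positivity

lemma ell_mul (k : ℕ) : ell k * ((k / 2 : ℕ) + 1 / 2) = 1/3 := by
  unfold ell; field_simp

lemma lowLen_nonneg (k : ℕ) (hk : 2 ≤ k) : 0 ≤ lowLen k := by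
  have h1 := ell_mul k
  have h2 := ell_pos k
  have hm : (1:ℝ) ≤ ((k/2 : ℕ) : ℝ) := by exact_mod_cast (show 1 ≤ k/2 by omega)
  unfold lowLen nHigh
  apply div_nonneg _ (by positivity)
  push_cast at *
  nlinarith

lemma bd_mono (k : ℕ) (hk : 2 ≤ k) : Monotone (bd k) := by
  intro i j hij
  unfold bd
  have h1 := ell_pos k
  have h2 := lowLen_nonneg k hk
  gcongr

lemma bd_last (k : ℕ) (hk : 2 ≤ k) : bd k (k+1) = 1 := by
  have hn : ((nLow k : ℕ) : ℝ) ≠ 0 := by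
    have : 0 < nLow k := by unfold nLow; omega
    positivity
  have h1 : (k + 1 + 1)/2 = nHigh k := by unfold nHigh; omega
  have h2 : (k+1)/2 = nLow k := rfl
  unfold bd
  rw [h1, h2, lowLen]
  field_simp
  ring

lemma bd_even (k i : ℕ) (hi : i % 2 = 0) : bd k (i+1) = bd k i + ell k := by
  unfold bd
  have h1 : (i+1+1)/2 = (i+1)/2 + 1 := by omega
  have h2 : (i+1)/2 = i/2 := by omega
  rw [h1, h2]; push_cast; ring

lemma bd_zero (k : ℕ) : bd k 0 = 0 := by simp [bd]
lemma bd_one (k : ℕ) : bd k 1 = ell k := by simp [bd]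

lemma Hset_mem (k j : ℕ) (hj : j < k + 1) (he : j % 2 = 0) :
    Set.Icc (bd k j) (bd k (j+1)) ⊆ Hset k := by
  intro x hx
  unfold Hset
  simp only [Set.mem_iUnion, Finset.mem_range]
  exact ⟨j, hj, by rw [if_pos he]; exact hx⟩

lemma Hset_meas (k : ℕ) : MeasurableSet (Hset k) := by
  unfold Hset
  refine Finset.measurableSet_biUnion _ fun j _ => ?_
  split_ifs
  · exact measurableSet_Icc
  · exact MeasurableSet.empty

lemma Hset_fin (k : ℕ) : volume (Hset k) ≠ ⊤ := by
  unfold Hset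
  refine ((measure_biUnion_lt_top (Finset.finite_toSet _) fun j _ => ?_)).ne
  split_ifs <;> simp

lemma Lset_fin (k : ℕ) : volume (Lset k) ≠ ⊤ := by
  unfold Lset
  refine ((measure_biUnion_lt_top (Finset.finite_toSet _) fun j _ => ?_)).ne
  split_ifs <;> simp

lemma cover_aux (k n : ℕ) (hn : n ≤ k + 1) : Set.Ico (bd k 0) (bd k n) ⊆ Hset k ∪ Lset k := by
  induction n with
  | zero => simp
  | succ n ih =>
    intro x hx
    by_cases hlt : x < bd k n
    · exact ih (by omega) ⟨hx.1, hlt⟩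
    · push Not at hlt
      by_cases he : n % 2 = 0
      · exact Or.inl (Hset_mem k n (by omega) he ⟨hlt, hx.2.le⟩)
      · rcases hlt.eq_or_lt with h | h
        · left
          obtain ⟨p, rfl⟩ : ∃ p, n = p + 1 := ⟨n - 1, by omega⟩
          refine Hset_mem k p (by omega) (by omega) ⟨?_, h.symm.le⟩
          rw [← h, bd_even k p (by omega)]
          linarith [ell_pos k]
        · right
          unfold Lset
          simp only [Set.mem_iUnion, Finset.mem_range]
          exact ⟨n, by omega, by rw [if_pos (by omega)]; exact ⟨h, hx.2⟩⟩

lemma lowDens_le (k : ℕ) (hk : 2 ≤ k) : lowDens k ≤ 3/2 := by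
  have h1 := cover_aux k (k+1) le_rfl
  rw [bd_zero, bd_last k hk] at h1
  have h2 : (1:ENNReal) ≤ volume (Hset k) + volume (Lset k) := by
    calc (1:ENNReal) = volume (Set.Ico (0:ℝ) 1) := by simp
      _ ≤ _ := measure_mono h1
      _ ≤ _ := measure_union_le _ _
  have h3 : (1:ℝ) ≤ (volume (Hset k)).toReal + (volume (Lset k)).toReal := by
    rw [← ENNReal.toReal_add (Hset_fin k) (Lset_fin k), ← ENNReal.toReal_one]
    exact ENNReal.toReal_mono (ENNReal.add_ne_top.2 ⟨Hset_fin k, Lset_fin k⟩) h2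
  unfold lowDens
  apply div_le_of_le_mul₀ ENNReal.toReal_nonneg (by norm_num)
  linarith

lemma sigma0_le (k : ℕ) (hk : 2 ≤ k) (x : ℝ) : sigma0 k x ≤ 3/2 := by
  unfold sigma0
  split_ifs
  · exact le_rfl
  · exact lowDens_le k hk

lemma sigma0_meas (k : ℕ) : Measurable (sigma0 k) :=
  Measurable.ite (Hset_meas k) measurable_const measurable_const

lemma sigma0_bdd (k : ℕ) (x : ℝ) : |sigma0 k x| ≤ 2 + |lowDens k| := by
  unfold sigma0
  have := abs_nonneg (lowDens k)
  split_ifs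
  · rw [abs_of_pos (by norm_num)]; linarith
  · linarith

lemma spike_meas (k : ℕ) (w z : ℝ) : Measurable (sigmaSpike k w z) := by
  have hd : Measurable (fun x : ℝ => x / ell k) := measurable_id.div_const _
  exact Measurable.ite (hd measurableSet_Ioc) measurable_const
    (Measurable.ite (hd measurableSet_Ioo) measurable_const (sigma0_meas k))

lemma spike_bdd (k : ℕ) (w z : ℝ) (x : ℝ) : |sigmaSpike k w z x| ≤ 2 + |lowDens k| := by
  unfold sigmaSpike
  have := abs_nonneg (lowDens k)
  split_ifs
  · rw [abs_of_pos (by norm_num)]; linarith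
  · rw [abs_of_pos (by norm_num)]; linarith
  · exact sigma0_bdd k x

lemma int_of_bdd (f : ℝ → ℝ) (hm : Measurable f) (C : ℝ) (hC : ∀ x, |f x| ≤ C) (a b : ℝ) :
    IntegrableOn f (Set.Icc a b) :=
  Measure.integrableOn_of_bounded (M := C) (by simp) hm.aestronglyMeasurable
    (Filter.Eventually.of_forall fun x => by simpa using hC x)

lemma int_const_on (f : ℝ → ℝ) (a b C : ℝ) (hab : a ≤ b) (h : ∀ x, a < x → x ≤ b → f x = C) :
    ∫ x in a..b, f x = C * (b - a) := by
  rw [intervalIntegral.integral_of_le hab,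
    setIntegral_congr_fun measurableSet_Ioc (g := fun _ => C) (fun x hx => h x hx.1 hx.2)]
  simp [hab, mul_comm]

/-- The cut sequence used by Alice. -/
def cutSeq (k : ℕ) (a t : ℝ) : ℕ → ℝ := fun i =>
  if i = 0 then 0 else if i = 1 then a * ell k else if i = 2 then bd k 2 + t * ell k else bd k i

lemma cutSeq_mono (k : ℕ) (hk : 2 ≤ k) (a t : ℝ) (ha : 0 ≤ a) (ha' : a ≤ 1) (ht : 0 ≤ t)
    (ht' : t ≤ 1) : Monotone (cutSeq k a t) := by
  have hl := ell_pos k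
  have hm := bd_mono k hk
  have h1 := bd_one k
  have h3 := bd_even k 2 rfl
  have h12 : bd k 1 ≤ bd k 2 := hm (by norm_num)
  apply monotone_nat_of_le_succ
  rintro (_ | _ | _ | n)
  · simp only [cutSeq]; norm_num; positivity
  · simp only [cutSeq]; norm_num; nlinarith
  · simp only [cutSeq]; norm_num at *; nlinarith
  · simpa [cutSeq] using hm (by omega)

/-- Alice's cuts. -/
def cutVec (k : ℕ) (a t : ℝ) : Fin k → ℝ := fun i => cutSeq k a t (i + 1)

lemma cutVec_ext (k : ℕ) (hk : 2 ≤ k) (a t : ℝ) (i : ℕ) (hi : i ≤ k + 1) :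
    extCuts k (cutVec k a t) i = cutSeq k a t i := by
  unfold extCuts cutVec
  rcases Nat.eq_zero_or_pos i with rfl | h
  · simp [cutSeq]
  · rw [if_neg (by omega)]
    split_ifs with h'
    · congr 1; simp only; omega
    · have : i = k + 1 := by omega
      subst this
      simp only [cutSeq]
      rw [if_neg (by omega), if_neg (by omega), if_neg (by omega), bd_last k hk]

lemma cutVec_valid (k : ℕ) (hk : 2 ≤ k) (a t : ℝ) (ha : 0 ≤ a) (ha' : a ≤ 1) (ht : 0 ≤ t)
    (ht' : t ≤ 1) : ValidCuts k (cutVec k a t) := by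
  have hm := cutSeq_mono k hk a t ha ha' ht ht'
  refine ⟨fun i j hij => hm (by simpa using hij), fun i => ⟨?_, ?_⟩⟩
  · have := hm (Nat.zero_le (i+1))
    simpa [cutSeq, cutVec] using this
  · have h := hm (show (i:ℕ) + 1 ≤ k + 1 by have := i.2; omega)
    rw [show cutSeq k a t (k+1) = 1 from ?_] at h
    · exact h
    · simp only [cutSeq]
      rw [if_neg (by omega), if_neg (by omega), if_neg (by omega), bd_last k hk]

lemma sum_even (n : ℕ) (C : ℝ) :
    ∑ i ∈ Finset.range n, (if i % 2 = 0 then C else 0) = ((n+1)/2 : ℕ) * C := by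
  induction n with
  | zero => simp
  | succ n ih =>
    rw [Finset.sum_range_succ, ih]
    by_cases h : n % 2 = 0
    · have : (n+1+1)/2 = (n+1)/2 + 1 := by omega
      rw [this, if_pos h]; push_cast; ring
    · have : (n+1+1)/2 = (n+1)/2 := by omega
      rw [this, if_neg h]; ring

/-- The value of the even piece for Alice's cuts. -/
lemma cutVec_val (k : ℕ) (hk : 2 ≤ k) (a t : ℝ) (ha : 0 ≤ a) (ha' : a ≤ 1) (ht : 0 ≤ t)
    (ht' : t ≤ 1) (f : ℝ → ℝ) (hf : ∀ a b, IntegrableOn f (Set.Icc a b)) (C A : ℝ)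
    (h0 : ∫ x in (0:ℝ)..(a * ell k), f x = A)
    (h2 : ∀ x ∈ Hset k, bd k 2 < x → f x = C) :
    pieceVal f (altPiece k (cutVec k a t) true) =
      A + C * (1 - t) * ell k + ((k/2 : ℕ) - 1) * (C * ell k) := by
  have hl := ell_pos k
  rw [(altPiece_int k _ (cutVec_valid k hk a t ha ha' ht ht') true f hf).2]
  have key : ∀ i ∈ Finset.range (k+1), (if decide (i % 2 = 0) = true then
      ∫ x in (extCuts k (cutVec k a t) i)..(extCuts k (cutVec k a t) (i+1)), f x else 0)
      = (if i % 2 = 0 then C * ell k else 0) + (if i = 0 then A - C * ell k else 0)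
        + (if i = 2 then - (C * t * ell k) else 0) := by
    intro i hi
    have hi' := Finset.mem_range.1 hi
    by_cases he : i % 2 = 0
    · rw [cutVec_ext k hk a t i (by omega), cutVec_ext k hk a t (i+1) (by omega)]
      have hb := bd_even k i he
      rcases Nat.eq_zero_or_pos i with rfl | hpos
      · simp [cutSeq, h0]
      · have hge : 2 ≤ i := by omega
        have hmem := Hset_mem k i hi' he
        have hbm := bd_mono k hk hge
        by_cases h2' : i = 2
        · subst h2'
          simp only [cutSeq]
          norm_num
          rw [int_const_on f _ _ C (by norm_num at hb; nlinarith)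
            (fun x hx1 hx2 => h2 x (hmem ⟨by nlinarith, hx2⟩) (by nlinarith))]
          norm_num at hb
          rw [hb]; ring
        · have : i ≠ 0 := by omega
          have h1' : i ≠ 1 := by omega
          simp [cutSeq, he, this, h2', h1']
          rw [int_const_on f _ _ C (by linarith)
            (fun x hx1 hx2 => h2 x (hmem ⟨hx1.le, hx2⟩) (by linarith)), hb]
          ring
    · have : i ≠ 0 := by omega
      have h2' : i ≠ 2 := by omega
      simp [he, this, h2']
  rw [Finset.sum_congr rfl key, Finset.sum_add_distrib, Finset.sum_add_distrib, sum_even,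
    Finset.sum_ite_eq', Finset.sum_ite_eq', if_pos (by simp), if_pos (by simp; omega)]
  have : (k+1+1)/2 = k/2 + 1 := by omega
  rw [this]; push_cast; ring

lemma sigma0_H (k : ℕ) (x : ℝ) (hx : x ∈ Hset k) : sigma0 k x = 3/2 := if_pos hx

lemma first_H (k : ℕ) (x : ℝ) (h0 : 0 ≤ x) (h1 : x ≤ ell k) : x ∈ Hset k :=
  Hset_mem k 0 (by omega) rfl ⟨by rw [bd_zero]; exact h0, by rw [zero_add, bd_one]; exact h1⟩

lemma cutVec_one (k : ℕ) (hk : 2 ≤ k) (a t : ℝ) (ha : 0 ≤ a) (ha' : a ≤ 1) (ht : 0 ≤ t)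
    (ht' : t ≤ 1) :
    pieceVal (fun _ => 1) (altPiece k (cutVec k a t) false) =
      1 - (a + (1 - t) + ((k/2 : ℕ) - 1)) * ell k := by
  have h1 := altPiece_total k _ (cutVec_valid k hk a t ha ha' ht ht') false
  have h2 := cutVec_val k hk a t ha ha' ht ht' (fun _ => 1) int_one 1 (a * ell k) (by simp)
    (fun _ _ _ => rfl)
  simp only [Bool.not_false] at h1
  linarith

lemma spike_first (k : ℕ) (w z : ℝ) (hz : 5/6 ≤ z) (hz' : z ≤ 11/12) (hw : 0 < w)
    (hw' : w ≤ 1/48) :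
    ∫ x in (0:ℝ)..(z * ell k), sigmaSpike k w z x = (3/2 * z + w/2) * ell k := by
  have hl := ell_pos k
  have hI : ∀ a b, a ≤ b → IntervalIntegrable (sigmaSpike k w z) volume a b := fun a b hab =>
    (intervalIntegrable_iff_integrableOn_Icc_of_le hab).2
      (int_of_bdd _ (spike_meas k w z) _ (spike_bdd k w z) a b)
  have e1 : 0 ≤ (z - w) * ell k := by apply mul_nonneg <;> linarith
  have e2 : (z - w) * ell k ≤ z * ell k := by nlinarith
  rw [← intervalIntegral.integral_add_adjacent_intervals (hI _ _ e1) (hI _ _ e2),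
    int_const_on _ _ _ (3/2) e1, int_const_on _ _ _ 2 e2]
  · ring
  · intro x h1 h2
    unfold sigmaSpike
    rw [if_pos]
    exact ⟨by rwa [lt_div_iff₀ hl], by rwa [div_le_iff₀ hl]⟩
  · intro x h1 h2
    have h3 : x / ell k ≤ z - w := by rwa [div_le_iff₀ hl]
    unfold sigmaSpike
    rw [if_neg (fun h => by linarith [h.1]), if_neg (fun h => by linarith [h.1])]
    exact sigma0_H k x (first_H k x h1.le (by nlinarith))

/-- Stackelberg values against spiked densities: for every `k ≥ 2`,
with Alice's value density uniform, (i) her Stackelberg value in the `k`-cut game against a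
Bob with density `σ₀^k` equals `2/3`; (ii) for every `z ∈ [5/6, 11/12]` and `w ∈ (0, 1/48]`,
her Stackelberg value against a Bob with density `σ_{w;z}^k` is at least `2/3 + 4w/(27k)`. -/
theorem spiked_stackelberg (k : ℕ) (hk : 2 ≤ k) :
    stackelbergValue k (fun _ => 1) (sigma0 k) = 2 / 3 ∧
    ∀ z ∈ Set.Icc (5/6 : ℝ) (11/12), ∀ w ∈ Set.Ioc (0 : ℝ) (1/48),
      2 / 3 + 4 * w / (27 * k) ≤ stackelbergValue k (fun _ => 1) (sigmaSpike k w z) := by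
  have hl := ell_pos k
  have hel := ell_mul k
  have hm : (1:ℝ) ≤ ((k/2 : ℕ) : ℝ) := by exact_mod_cast (show 1 ≤ k/2 by omega)
  have hI0 := int_of_bdd _ (sigma0_meas k) _ (sigma0_bdd k)
  refine ⟨?_, ?_⟩
  · apply IsGreatest.csSup_eq
    constructor
    · refine ⟨cutVec k (1/2) 0, false, cutVec_valid k hk _ _ (by norm_num) (by norm_num)
        (by norm_num) (by norm_num), ?_, ?_⟩
      · rw [Bool.not_false, cutVec_val k hk (1/2) 0 (by norm_num) (by norm_num)
          (by norm_num) (by norm_num) _ hI0 (3/2) (3/2 * (1/2 * ell k - 0))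
          (int_const_on _ _ _ _ (by positivity)
            (fun x h1 h2 => sigma0_H k x (first_H k x h1.le (by linarith))))
          (fun x hx _ => sigma0_H k x hx)]
        nlinarith
      · rw [cutVec_one k hk (1/2) 0 (by norm_num) (by norm_num) (by norm_num) (by norm_num)]
        nlinarith
    · rintro u ⟨c, b, hc, hB, rfl⟩
      have h1 := altPiece_total k c hc b
      have hint := (altPiece_int k c hc (!b) _ hI0).1
      have hint1 := (altPiece_int k c hc (!b) _ int_one).1
      have h2 : pieceVal (sigma0 k) (altPiece k c (!b))
          ≤ 3/2 * pieceVal (fun _ => 1) (altPiece k c (!b)) := by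
        unfold pieceVal
        rw [← integral_const_mul]
        exact integral_mono hint (hint1.const_mul _) (fun x => by simpa using sigma0_le k hk x)
      linarith
  · rintro z ⟨hz, hz'⟩ w ⟨hw, hw'⟩
    have hIs := int_of_bdd _ (spike_meas k w z) _ (spike_bdd k w z)
    have ht : 0 ≤ z - 1/2 + w/3 := by linarith
    have ht' : z - 1/2 + w/3 ≤ 1 := by linarith
    have hbd : BddAbove { u : ℝ | ∃ (c : Fin k → ℝ) (b : Bool), ValidCuts k c ∧
        1 / 2 ≤ pieceVal (sigmaSpike k w z) (altPiece k c (!b)) ∧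
        u = pieceVal (fun _ => 1) (altPiece k c b) } := by
      refine ⟨1, ?_⟩
      rintro u ⟨c, b, hc, -, rfl⟩
      have h1 := altPiece_total k c hc b
      have h2 := pieceVal_one_nonneg (altPiece k c (!b))
      linarith
    have hv := cutVec_valid k hk z (z - 1/2 + w/3) (by linarith) (by linarith) ht ht'
    refine le_trans ?_ (le_csSup hbd ⟨cutVec k z (z - 1/2 + w/3), false, hv, ?_, rfl⟩)
    · rw [cutVec_one k hk z _ (by linarith) (by linarith) ht ht']
      have e : 1 - (z + (1 - (z - 1/2 + w/3)) + (((k/2 : ℕ):ℝ) - 1)) * ell k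
          = 2/3 + w * (ell k / 3) := by linear_combination -hel
      rw [e]
      have hkm : (2:ℝ) * ((k/2 : ℕ) : ℝ) ≤ k := by exact_mod_cast (show 2 * (k/2) ≤ k by omega)
      have : 4 / (27 * (k:ℝ)) ≤ ell k / 3 := by
        unfold ell
        rw [div_div, div_le_div_iff₀ (by positivity) (by positivity)]
        linarith
      have e2 : 4 * w / (27 * (k:ℝ)) = w * (4 / (27 * k)) := by ring
      rw [e2]
      have := mul_le_mul_of_nonneg_left this hw.le
      linarith
    · rw [Bool.not_false, cutVec_val k hk z _ (by linarith) (by linarith) ht ht' _ hIs (3/2) _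
        (spike_first k w z hz hz' hw hw')]
      · nlinarith
      · intro x hx hx2
        have h12 := bd_mono k hk (show 1 ≤ 2 by norm_num)
        rw [bd_one] at h12
        have h3 : 1 < x / ell k := by rw [lt_div_iff₀ hl]; linarith
        unfold sigmaSpike
        rw [if_neg (fun h => by linarith [h.2]), if_neg (fun h => by linarith [h.2])]
        exact sigma0_H k x hx

end
end
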